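/- arXiv:2602.10917 — 6 statements merged into one kernel-verified Lean document; each statement's English description precedes it below -/
import Mathlib

section
/- For every integer t ≥ 2, ∑_{j=1}^{⌊t/2⌋} j^{−5/3} · exp(−∑_{k=j+1}^t 1/k) ≤ 6·2^{−1/3} · t^{−2/3}. -/
lemma aux_exp (j : ℕ) (t : ℕ) (h : j ≤ t) :
    Real.exp (-∑ k ∈ Finset.Icc (j + 1) t, (1 : ℝ) / k) ≤ ((j : ℝ) + 1) / (t + 1) := by
  induction t, h using Nat.le_induction with
  | base =>
    have : (j : ℝ) + 1 ≠ 0 := by positivity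
    simp [div_self this]
  | succ t h ih =>
    rw [Finset.sum_Icc_succ_top (by omega), neg_add, Real.exp_add]
    have h1 : Real.exp (-((1 : ℝ) / ((t + 1 : ℕ) : ℝ))) ≤ ((t : ℝ) + 1) / (t + 2) := by
      rw [Real.exp_neg, ← inv_div ((t : ℝ) + 2) ((t : ℝ) + 1)]
      apply inv_anti₀ (by positivity)
      have := Real.add_one_le_exp ((1 : ℝ) / ((t + 1 : ℕ) : ℝ))
      refine le_trans (le_of_eq ?_) this
      push_cast
      field_simp
      ring
    refine (mul_le_mul ih h1 (Real.exp_pos _).le (by positivity)).trans (le_of_eq ?_)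
    push_cast
    field_simp
    ring

lemma aux_sum (n : ℕ) :
    ∑ j ∈ Finset.Icc 1 n, (j : ℝ) ^ (-(2/3) : ℝ) ≤ 3 * (n : ℝ) ^ (1/3 : ℝ) := by
  induction n with
  | zero => simp
  | succ n ih =>
    rw [Finset.sum_Icc_succ_top (by omega)]
    have ha : (0 : ℝ) < ((n + 1 : ℕ) : ℝ) ^ (1/3 : ℝ) := by positivity
    have hb : (0 : ℝ) ≤ (n : ℝ) ^ (1/3 : ℝ) := by positivity
    have ha3 : (((n + 1 : ℕ) : ℝ) ^ (1/3 : ℝ)) ^ 3 = n + 1 := by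
      rw [← Real.rpow_natCast, ← Real.rpow_mul (by positivity)]
      norm_num
    have hb3 : ((n : ℝ) ^ (1/3 : ℝ)) ^ 3 = n := by
      rw [← Real.rpow_natCast, ← Real.rpow_mul (by positivity)]
      norm_num
    have hc : ((n + 1 : ℕ) : ℝ) ^ (-(2/3) : ℝ) = 1 / (((n + 1 : ℕ) : ℝ) ^ (1/3 : ℝ)) ^ 2 := by
      rw [Real.rpow_neg (by positivity), ← Real.rpow_natCast, ← Real.rpow_mul (by positivity)]
      norm_num
    rw [hc]
    generalize ((n + 1 : ℕ) : ℝ) ^ (1/3 : ℝ) = a at *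
    generalize (n : ℝ) ^ (1/3 : ℝ) = b at *
    have hab : b ≤ a := by
      apply le_of_pow_le_pow_left₀ (n := 3) (by norm_num) ha.le
      linarith
    have : 1 / a ^ 2 ≤ 3 * (a - b) := by
      rw [div_le_iff₀ (by positivity)]
      have h2 : 1 = (a - b) * (a ^ 2 + a * b + b ^ 2) := by linarith
      have h3 : a ^ 2 + a * b + b ^ 2 ≤ 3 * a ^ 2 := by nlinarith
      have := mul_le_mul_of_nonneg_left h3 (sub_nonneg.2 hab)
      linarith
    linarith

/-- For every integer `t ≥ 2`,
`∑_{j=1}^{⌊t/2⌋} j^{−5/3} · exp(−∑_{k=j+1}^t 1/k) ≤ 6·2^{−1/3}·t^{−2/3}`. -/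
theorem stmt_3 (t : ℕ) (ht : 2 ≤ t) :
    ∑ j ∈ Finset.Icc 1 (t / 2),
        (j : ℝ) ^ (-(5/3) : ℝ) * Real.exp (-∑ k ∈ Finset.Icc (j + 1) t, (1 : ℝ) / k) ≤
      6 * (2 : ℝ) ^ (-(1/3) : ℝ) * (t : ℝ) ^ (-(2/3) : ℝ) := by
  have ht0 : (0 : ℝ) < t := by exact_mod_cast (by omega : 0 < t)
  have h1 : ∀ j ∈ Finset.Icc 1 (t / 2),
      (j : ℝ) ^ (-(5/3) : ℝ) * Real.exp (-∑ k ∈ Finset.Icc (j + 1) t, (1 : ℝ) / k) ≤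
        (2 / t) * (j : ℝ) ^ (-(2/3) : ℝ) := by
    intro j hj
    rw [Finset.mem_Icc] at hj
    have hj1 : (1 : ℝ) ≤ j := by exact_mod_cast hj.1
    have hj0 : (0 : ℝ) < j := by linarith
    have h2 : ((j : ℝ) + 1) / (t + 1) ≤ 2 * j / t := by
      apply div_le_div₀ <;> linarith
    have h3 := (aux_exp j t (by omega)).trans h2
    have h4 : (j : ℝ) ^ (-(2/3) : ℝ) = (j : ℝ) ^ (-(5/3) : ℝ) * j := by
      rw [← Real.rpow_add_one hj0.ne']
      norm_num
    rw [h4]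
    refine (mul_le_mul_of_nonneg_left h3 (by positivity)).trans (le_of_eq ?_)
    ring
  refine (Finset.sum_le_sum h1).trans ?_
  rw [← Finset.mul_sum]
  have h5 : ((t / 2 : ℕ) : ℝ) ^ (1/3 : ℝ) ≤ ((t : ℝ) / 2) ^ (1/3 : ℝ) := by
    apply Real.rpow_le_rpow (by positivity) _ (by norm_num)
    exact_mod_cast (Nat.cast_div_le (α := ℝ) (m := t) (n := 2))
  have h6 : (t : ℝ) ^ (1/3 : ℝ) = (t : ℝ) ^ (-(2/3) : ℝ) * t := by
    rw [← Real.rpow_add_one ht0.ne']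
    norm_num
  have h7 : ((t : ℝ) / 2) ^ (1/3 : ℝ) = (t : ℝ) ^ (-(2/3) : ℝ) * t * (2 : ℝ) ^ (-(1/3) : ℝ) := by
    rw [Real.div_rpow ht0.le (by norm_num), h6,
      Real.rpow_neg (by norm_num : (0 : ℝ) ≤ 2), div_eq_mul_inv]
  have h8 := (aux_sum (t / 2)).trans (mul_le_mul_of_nonneg_left h5 (by norm_num))
  rw [h7] at h8
  refine (mul_le_mul_of_nonneg_left h8 (by positivity)).trans (le_of_eq ?_)
  field_simp
  ring
end

section
/- For every integer t ≥ 2, ∑_{j=⌊t/2⌋+1}^{t} j^{−5/3} · exp(−∑_{k=j+1}^t 1/k) ≤ 2^{8/3} · t^{−2/3}. -/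
/-- For every integer `t ≥ 2`,
`∑_{j=⌊t/2⌋+1}^{t} j^{−5/3} · exp(−∑_{k=j+1}^t 1/k) ≤ 2^{8/3}·t^{−2/3}`. -/
theorem stmt_4 (t : ℕ) (ht : 2 ≤ t) :
    ∑ j ∈ Finset.Icc (t / 2 + 1) t,
        (j : ℝ) ^ (-(5/3) : ℝ) * Real.exp (-∑ k ∈ Finset.Icc (j + 1) t, (1 : ℝ) / k) ≤
      (2 : ℝ) ^ ((8/3) : ℝ) * (t : ℝ) ^ (-(2/3) : ℝ) := by
  have ht0 : (0 : ℝ) < t := by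
    have : 0 < t := by omega
    exact_mod_cast this
  have key : ∀ j ∈ Finset.Icc (t / 2 + 1) t,
      (j : ℝ) ^ (-(5/3) : ℝ) * Real.exp (-∑ k ∈ Finset.Icc (j + 1) t, (1 : ℝ) / k)
        ≤ ((t : ℝ) / 2) ^ (-(5/3) : ℝ) := by
    intro j hj
    rw [Finset.mem_Icc] at hj
    have h1 : (t : ℝ) / 2 ≤ j := by
      have : t ≤ 2 * j := by omega
      have : (t : ℝ) ≤ 2 * j := by exact_mod_cast this
      linarith
    have h2 : (j : ℝ) ^ (-(5/3) : ℝ) ≤ ((t : ℝ) / 2) ^ (-(5/3) : ℝ) :=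
      Real.rpow_le_rpow_of_nonpos (by positivity) h1 (by norm_num)
    have h3 : Real.exp (-∑ k ∈ Finset.Icc (j + 1) t, (1 : ℝ) / k) ≤ 1 := by
      rw [Real.exp_le_one_iff, neg_nonpos]
      exact Finset.sum_nonneg fun k _ => by positivity
    calc _ ≤ (j : ℝ) ^ (-(5/3) : ℝ) * 1 := by gcongr
      _ ≤ _ := by rwa [mul_one]
  have hsum := Finset.sum_le_card_nsmul _ _ _ key
  refine hsum.trans ?_
  rw [nsmul_eq_mul, Nat.card_Icc]
  have hc : ((t + 1 - (t / 2 + 1) : ℕ) : ℝ) ≤ t := by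
    have : t + 1 - (t / 2 + 1) ≤ t := by omega
    exact_mod_cast this
  have e1 : (t : ℝ) * ((t : ℝ) / 2) ^ (-(5/3) : ℝ)
      = (2 : ℝ) ^ ((5/3) : ℝ) * (t : ℝ) ^ (-(2/3) : ℝ) := by
    rw [Real.div_rpow ht0.le (by norm_num), Real.rpow_neg (by norm_num : (0:ℝ) ≤ 2), div_inv_eq_mul]
    have : (t : ℝ) ^ (-(2/3) : ℝ) = t * (t : ℝ) ^ (-(5/3) : ℝ) := by
      rw [show (-(2/3) : ℝ) = 1 + -(5/3) by norm_num, Real.rpow_add ht0, Real.rpow_one]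
    rw [this]; ring
  calc _ ≤ (t : ℝ) * ((t : ℝ) / 2) ^ (-(5/3) : ℝ) := by gcongr
    _ = _ := e1
    _ ≤ _ := by
      gcongr <;> norm_num
end

section
/- Define X_t := ∑_{j=1}^{t} j^{−5/3} · exp(−∑_{k=j+1}^t 1/k) for integers t ≥ 1. Then for every t ≥ 1, X_t ≤ 7·2^{2/3} · t^{−2/3}. -/
/-- `X t := ∑_{j=1}^{t} j^{−5/3} · exp(−∑_{k=j+1}^t 1/k)`. -/
noncomputable def X (t : ℕ) : ℝ :=
  ∑ j ∈ Finset.Icc 1 t,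
    (j : ℝ) ^ (-(5/3) : ℝ) * Real.exp (-∑ k ∈ Finset.Icc (j + 1) t, (1 : ℝ) / k)

lemma X_succ (n : ℕ) : X (n + 1) =
    X n * Real.exp (-(1 / ((n : ℝ) + 1))) + ((n : ℝ) + 1) ^ (-(5/3) : ℝ) := by
  unfold X
  rw [Finset.sum_Icc_succ_top (by omega), Finset.sum_mul]
  congr 1
  · apply Finset.sum_congr rfl
    intro j hj
    have hj' := Finset.mem_Icc.mp hj
    rw [Finset.sum_Icc_succ_top (by omega), neg_add, Real.exp_add]
    push_cast
    ring
  · simp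

lemma X_nonneg (n : ℕ) : 0 ≤ X n := by
  unfold X
  positivity

lemma X_bound (n : ℕ) : ((n : ℝ) + 1) * X n ≤ 6 * (n : ℝ) ^ ((1/3) : ℝ) := by
  induction n with
  | zero => simp [X]
  | succ n ih =>
    rw [X_succ]
    push_cast
    have hn : (0 : ℝ) ≤ n := Nat.cast_nonneg n
    set b : ℝ := (n : ℝ) ^ ((1/3) : ℝ) with hb
    set a : ℝ := ((n : ℝ) + 1) ^ ((1/3) : ℝ) with ha
    have hb0 : 0 ≤ b := by positivity
    have ha0 : 0 < a := by positivity
    have hb3 : b ^ 3 = n := by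
      rw [hb, ← Real.rpow_natCast, ← Real.rpow_mul hn]; norm_num
    have ha3 : a ^ 3 = (n : ℝ) + 1 := by
      rw [ha, ← Real.rpow_natCast, ← Real.rpow_mul (by positivity)]; norm_num
    have ha5 : ((n : ℝ) + 1) ^ (-(5/3) : ℝ) = 1 / a ^ 5 := by
      rw [Real.rpow_neg (by positivity), ha, ← Real.rpow_natCast, ← Real.rpow_mul (by positivity)]
      norm_num
    have hX := X_nonneg n
    have hexp : ((n : ℝ) + 1 + 1) * Real.exp (-(1 / ((n : ℝ) + 1))) ≤ (n : ℝ) + 1 := by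
      have h1 := Real.add_one_le_exp (1 / ((n : ℝ) + 1))
      rw [Real.exp_neg, ← div_eq_mul_inv, div_le_iff₀ (Real.exp_pos _)]
      calc (n : ℝ) + 1 + 1 = ((n : ℝ) + 1) * (1 / ((n : ℝ) + 1) + 1) := by field_simp; ring
        _ ≤ _ := by gcongr
    have h1 : ((n : ℝ) + 1 + 1) * (1 / a ^ 5) ≤ 2 / a ^ 2 := by
      rw [← ha3, mul_one_div, div_le_div_iff₀ (by positivity) (by positivity)]
      have h13 : 1 ≤ a ^ 3 := by linarith
      have : 0 ≤ a ^ 2 * (a ^ 3 - 1) := mul_nonneg (by positivity) (by linarith)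
      nlinarith
    have hba : b ≤ a := by
      rw [hb, ha]; gcongr; linarith
    have h2 : 2 / a ^ 2 ≤ 6 * (a - b) := by
      rw [div_le_iff₀ (by positivity)]
      have h3 : a ^ 3 - b ^ 3 = 1 := by rw [ha3, hb3]; ring
      have : 0 ≤ (a - b) * ((a - b) * (2 * a + b)) :=
        mul_nonneg (by linarith) (mul_nonneg (by linarith) (by linarith))
      nlinarith
    rw [ha5]
    have h4 := mul_le_mul_of_nonneg_right hexp hX
    nlinarith

/-- For every `t ≥ 1`, `X t ≤ 7·2^{2/3}·t^{−2/3}`. -/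
theorem stmt_5 (t : ℕ) (ht : 1 ≤ t) :
    X t ≤ 7 * (2 : ℝ) ^ ((2/3) : ℝ) * (t : ℝ) ^ (-(2/3) : ℝ) := by
  have h := X_bound t
  have ht' : (1 : ℝ) ≤ t := by exact_mod_cast ht
  have e : (t : ℝ) ^ ((1/3) : ℝ) = t * (t : ℝ) ^ (-(2/3) : ℝ) := by
    nth_rewrite 2 [← Real.rpow_one (t : ℝ)]
    rw [← Real.rpow_add (by linarith)]; norm_num
  rw [e] at h
  have hX := X_nonneg t
  have hp : 0 ≤ (t : ℝ) ^ (-(2/3) : ℝ) := by positivity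
  have h6 : X t ≤ 6 * (t : ℝ) ^ (-(2/3) : ℝ) := by
    have : (t : ℝ) * X t ≤ t * (6 * (t : ℝ) ^ (-(2/3) : ℝ)) := by nlinarith
    exact le_of_mul_le_mul_left this (by linarith)
  have h2 : (1 : ℝ) ≤ (2 : ℝ) ^ ((2/3) : ℝ) :=
    Real.one_le_rpow (by norm_num) (by norm_num)
  refine h6.trans (mul_le_mul_of_nonneg_right (by linarith) hp)
end

section
/- Let A ≥ 1 be an integer, let π : {1,…,A} → ℝ be a probability vector with strictly positive entries, let η ≥ 0, τ ≥ 0 be reals with η·τ ≤ 1/2, let C₀ ≥ 0 be a real, and let Q : {1,…,A} → ℝ satisfy 0 ≤ Q_a ≤ C₀ − τ·ln(π_a) for every a. Then ∑_{a=1}^A π_a · exp(η·Q_a) · Q_a^2 ≤ exp(η·C₀) · ( 2·A^{ητ}·C₀^2 + (128/e^2)·τ^2·A^{3/4} ). -/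
lemma aux_jensen (A : ℕ) (π : Fin A → ℝ) (hπ : ∀ a, 0 < π a) (hsum : ∑ a, π a = 1)
    (c : ℝ) (h0 : 0 ≤ c) (h1 : c ≤ 1) :
    ∑ a, π a * ((π a)⁻¹) ^ c ≤ (A : ℝ) ^ c := by
  have h := (Real.concaveOn_rpow h0 h1).le_map_sum (t := Finset.univ) (w := π)
    (p := fun a => (π a)⁻¹) (fun i _ => (hπ i).le) hsum
    (fun i _ => (inv_pos.2 (hπ i)).le)
  have e : ∑ a, π a * (π a)⁻¹ = (A : ℝ) := by
    rw [Finset.sum_congr rfl (fun a _ => mul_inv_cancel₀ (hπ a).ne')]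
    simp
  simp only [smul_eq_mul] at h
  rwa [e] at h

lemma aux_sq (L : ℝ) (hL : 0 ≤ L) :
    Real.exp (-L / 2) * L ^ 2 ≤ 64 / Real.exp 1 ^ 2 * Real.exp (-L / 4) := by
  have h1 : L / 8 ≤ Real.exp (L / 8 - 1) := by
    have := Real.add_one_le_exp (L / 8 - 1)
    linarith
  have h2 : (L / 8) ^ 2 ≤ Real.exp (L / 8 - 1) ^ 2 := by gcongr
  have h3 : Real.exp (L / 8 - 1) ^ 2 = Real.exp (L / 4) / Real.exp 1 ^ 2 := by
    rw [← Real.exp_nat_mul, ← Real.exp_nat_mul, ← Real.exp_sub]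
    congr 1
    push_cast
    ring
  have h4 : Real.exp (-L / 4) = Real.exp (-L / 2) * Real.exp (L / 4) := by
    rw [← Real.exp_add]
    congr 1
    ring
  rw [h3] at h2
  rw [h4]
  calc Real.exp (-L / 2) * L ^ 2 = Real.exp (-L / 2) * (64 * (L / 8) ^ 2) := by ring
    _ ≤ Real.exp (-L / 2) * (64 * (Real.exp (L / 4) / Real.exp 1 ^ 2)) := by gcongr
    _ = _ := by ring

lemma aux_point (p η τ C q : ℝ) (hp : 0 < p) (hp1 : p ≤ 1) (hη : 0 ≤ η)
    (hητ : η * τ ≤ 1/2) (hq : 0 ≤ q) (hqu : q ≤ C - τ * Real.log p) :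
    p * Real.exp (η * q) * q ^ 2 ≤
      Real.exp (η * C) * (2 * C ^ 2 * (p * (p⁻¹) ^ (η * τ)) +
        (128 / Real.exp 1 ^ 2) * τ ^ 2 * (p * (p⁻¹) ^ ((3/4) : ℝ))) := by
  obtain ⟨L, hL⟩ : ∃ L, L = -Real.log p := ⟨_, rfl⟩
  have hL0 : 0 ≤ L := by
    have := Real.log_nonpos hp.le hp1
    linarith
  have hpe : p = Real.exp (-L) := by rw [hL, neg_neg, Real.exp_log hp]
  have hc : ∀ c : ℝ, p * (p⁻¹) ^ c = Real.exp (-L + L * c) := by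
    intro c
    rw [Real.rpow_def_of_pos (inv_pos.2 hp), Real.log_inv, ← hL, Real.exp_add, ← hpe]
  rw [hc, hc]
  have hqu' : q ≤ C + τ * L := by rw [hL]; linarith
  have hq2 : q ^ 2 ≤ 2 * C ^ 2 + 2 * τ ^ 2 * L ^ 2 := by
    have : q ^ 2 ≤ (C + τ * L) ^ 2 := by gcongr
    nlinarith [sq_nonneg (C - τ * L)]
  have he : p * Real.exp (η * q) ≤ Real.exp (η * C) * Real.exp (-L + L * (η * τ)) := by
    rw [hpe, ← Real.exp_add, ← Real.exp_add]
    apply Real.exp_le_exp.2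
    have := mul_le_mul_of_nonneg_left hqu' hη
    linarith
  have hh : Real.exp (-L + L * (η * τ)) ≤ Real.exp (-L / 2) := by
    apply Real.exp_le_exp.2
    have := mul_le_mul_of_nonneg_left hητ hL0
    linarith
  have hs := aux_sq L hL0
  have h34 : -L + L * (3/4) = -L / 4 := by ring
  rw [h34]
  calc p * Real.exp (η * q) * q ^ 2
      ≤ (Real.exp (η * C) * Real.exp (-L + L * (η * τ))) *
        (2 * C ^ 2 + 2 * τ ^ 2 * L ^ 2) := by gcongr
    _ = Real.exp (η * C) * (2 * C ^ 2 * Real.exp (-L + L * (η * τ)) +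
        2 * τ ^ 2 * (Real.exp (-L + L * (η * τ)) * L ^ 2)) := by ring
    _ ≤ Real.exp (η * C) * (2 * C ^ 2 * Real.exp (-L + L * (η * τ)) +
        2 * τ ^ 2 * (64 / Real.exp 1 ^ 2 * Real.exp (-L / 4))) := by
        have := (mul_le_mul_of_nonneg_right hh (sq_nonneg L)).trans hs
        gcongr
    _ = _ := by ring


/-- For a probability vector `π` on `A ≥ 1` elements with strictly positive
entries, reals `η, τ ≥ 0` with `η·τ ≤ 1/2`, `C₀ ≥ 0`, and `Q` with
`0 ≤ Q_a ≤ C₀ − τ·ln(π_a)` for all `a`, one has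
`∑_a π_a·exp(η·Q_a)·Q_a² ≤ exp(η·C₀)·(2·A^{ητ}·C₀² + (128/e²)·τ²·A^{3/4})`. -/
theorem stmt_13 (A : ℕ) (hA : 1 ≤ A) (π : Fin A → ℝ)
    (hπ : ∀ a, 0 < π a) (hsum : ∑ a, π a = 1)
    (η τ : ℝ) (hη : 0 ≤ η) (hτ : 0 ≤ τ) (hητ : η * τ ≤ 1/2)
    (C₀ : ℝ) (hC₀ : 0 ≤ C₀) (Q : Fin A → ℝ)
    (hQ0 : ∀ a, 0 ≤ Q a) (hQub : ∀ a, Q a ≤ C₀ - τ * Real.log (π a)) :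
    ∑ a, π a * Real.exp (η * Q a) * (Q a) ^ 2 ≤
      Real.exp (η * C₀) *
        (2 * (A : ℝ) ^ (η * τ) * C₀ ^ 2 + (128 / Real.exp 1 ^ 2) * τ ^ 2 * (A : ℝ) ^ ((3/4) : ℝ)) := by
  have hp1 : ∀ a, π a ≤ 1 := fun a => by
    rw [← hsum]
    exact Finset.single_le_sum (fun i _ => (hπ i).le) (Finset.mem_univ a)
  have j1 := aux_jensen A π hπ hsum (η * τ) (mul_nonneg hη hτ) (by linarith)
  have j2 := aux_jensen A π hπ hsum (3/4) (by norm_num) (by norm_num)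
  refine (Finset.sum_le_sum fun a _ => aux_point (π a) η τ C₀ (Q a) (hπ a) (hp1 a) hη hητ
    (hQ0 a) (hQub a)).trans ?_
  rw [← Finset.mul_sum, Finset.sum_add_distrib, ← Finset.mul_sum, ← Finset.mul_sum,
    mul_right_comm 2 _ (C₀ ^ 2)]
  gcongr
end

section
/- Let ε ∈ (0,1] and let c₁, c₂, c₃, c₄ be positive reals with c₁ ≤ c₂, c₃ ≤ c₄ and c₁·c₃·ε^4 ≤ 1. Let t ≥ 1 be an integer and suppose (η_j)_{j=1}^t and (τ_j)_{j=1}^t are reals with c₁·ε^3 ≤ η_j ≤ c₂·ε^3 and c₃·ε ≤ τ_j ≤ c₄·ε for all j. Then ∑_{j=1}^t η_j^2 · exp(−∑_{k=j+1}^t η_k·τ_k) ≤ (2·c₂^2 / (c₁·c₃)) · ε^2, where for j = t the inner sum is the empty sum, equal to 0. -/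
theorem aux_sum_s15 (x A : ℝ) (hx : 0 < x) (hx1 : x ≤ 1) (hA : 0 ≤ A) (f g : ℕ → ℝ) (t : ℕ)
    (hf : ∀ j, 1 ≤ j → j ≤ t → f j ≤ A) (hg : ∀ j, 1 ≤ j → j ≤ t → x ≤ g j) :
    ∑ j ∈ Finset.Icc 1 t, f j * Real.exp (-∑ k ∈ Finset.Icc (j + 1) t, g k) ≤ 2 * A / x := by
  induction t with
  | zero => simp; positivity
  | succ t ih =>
    have ih' := ih (fun j h1 h2 => hf j h1 (by omega)) (fun j h1 h2 => hg j h1 (by omega))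
    rw [Finset.sum_Icc_succ_top (by omega)]
    have h1 : ∑ j ∈ Finset.Icc 1 t, f j * Real.exp (-∑ k ∈ Finset.Icc (j + 1) (t + 1), g k)
        = (∑ j ∈ Finset.Icc 1 t, f j * Real.exp (-∑ k ∈ Finset.Icc (j + 1) t, g k))
          * Real.exp (-g (t + 1)) := by
      rw [Finset.sum_mul]
      refine Finset.sum_congr rfl fun j hj => ?_
      have := (Finset.mem_Icc.mp hj).2
      rw [Finset.sum_Icc_succ_top (by omega), neg_add, Real.exp_add, mul_assoc]
    have h2 : Finset.Icc (t + 1 + 1) (t + 1) = ∅ := Finset.Icc_eq_empty (by omega)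
    rw [h1, h2]
    simp only [Finset.sum_empty, neg_zero, Real.exp_zero, mul_one]
    have hft := hf (t + 1) (by omega) le_rfl
    have hgt := hg (t + 1) (by omega) le_rfl
    have he : Real.exp (-g (t + 1)) ≤ 1 - x / 2 := by
      calc Real.exp (-g (t + 1)) ≤ Real.exp (-x) := Real.exp_le_exp.mpr (by linarith)
        _ ≤ 1 / (1 + x) := by
          rw [Real.exp_neg, ← one_div]
          exact one_div_le_one_div_of_le (by linarith) (by linarith [Real.add_one_le_exp x])
        _ ≤ 1 - x / 2 := by
          rw [div_le_iff₀ (by linarith)]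
          nlinarith
    have hB : 0 ≤ 2 * A / x := by positivity
    have h3 := mul_le_mul_of_nonneg_right ih' (Real.exp_pos (-g (t + 1))).le
    have h4 := mul_le_mul_of_nonneg_left he hB
    have h5 : 2 * A / x * (1 - x / 2) = 2 * A / x - A := by field_simp
    linarith

/-- Upper bound on the recursive error sum: if `c₁ε³ ≤ η_j ≤ c₂ε³` and
`c₃ε ≤ τ_j ≤ c₄ε` for all `1 ≤ j ≤ t`, with `c₁ ≤ c₂`, `c₃ ≤ c₄`, `c₁c₃ε⁴ ≤ 1`, then
`∑_{j=1}^t η_j²·exp(−∑_{k=j+1}^t η_kτ_k) ≤ (2c₂²/(c₁c₃))·ε²`. -/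
theorem stmt_15 (ε : ℝ) (hε0 : 0 < ε) (hε1 : ε ≤ 1)
    (c₁ c₂ c₃ c₄ : ℝ) (hc₁ : 0 < c₁) (hc₂ : 0 < c₂) (hc₃ : 0 < c₃) (hc₄ : 0 < c₄)
    (hc12 : c₁ ≤ c₂) (hc34 : c₃ ≤ c₄) (hsmall : c₁ * c₃ * ε ^ 4 ≤ 1)
    (t : ℕ) (ht : 1 ≤ t) (η τ : ℕ → ℝ)
    (hηl : ∀ j, 1 ≤ j → j ≤ t → c₁ * ε ^ 3 ≤ η j) (hηu : ∀ j, 1 ≤ j → j ≤ t → η j ≤ c₂ * ε ^ 3)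
    (hτl : ∀ j, 1 ≤ j → j ≤ t → c₃ * ε ≤ τ j) (hτu : ∀ j, 1 ≤ j → j ≤ t → τ j ≤ c₄ * ε) :
    ∑ j ∈ Finset.Icc 1 t, (η j) ^ 2 * Real.exp (-∑ k ∈ Finset.Icc (j + 1) t, η k * τ k) ≤
      (2 * c₂ ^ 2 / (c₁ * c₃)) * ε ^ 2 := by
  have hx : 0 < c₁ * c₃ * ε ^ 4 := by positivity
  have h := aux_sum_s15 (c₁ * c₃ * ε ^ 4) ((c₂ * ε ^ 3) ^ 2) hx hsmall (by positivity)
    (fun j => η j ^ 2) (fun j => η j * τ j) t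
    (fun j h1 h2 => by
      have h0 : 0 < c₁ * ε ^ 3 := by positivity
      exact pow_le_pow_left₀ (by linarith [hηl j h1 h2]) (hηu j h1 h2) 2)
    (fun j h1 h2 => by
      have h0 : 0 < c₁ * ε ^ 3 := by positivity
      have h3 : 0 < c₃ * ε := by positivity
      have := mul_le_mul (hηl j h1 h2) (hτl j h1 h2) h3.le (by linarith [hηl j h1 h2])
      calc c₁ * c₃ * ε ^ 4 = c₁ * ε ^ 3 * (c₃ * ε) := by ring
        _ ≤ _ := this)
  refine h.trans (le_of_eq ?_)
  field_simp
end

section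
/- Let ε ∈ (0,1] and let c₁, c₂, c₃, c₄ be positive reals with c₁ ≤ c₂ and c₃ ≤ c₄. Let t ≥ 1 be an integer with t ≥ ln(2)/(c₂·c₄·ε^4), and suppose (η_j)_{j=1}^t and (τ_j)_{j=1}^t are reals with c₁·ε^3 ≤ η_j ≤ c₂·ε^3 and c₃·ε ≤ τ_j ≤ c₄·ε for all j. Then ∑_{j=1}^t η_j^2 · exp(−∑_{k=j+1}^t η_k·τ_k) ≥ (c₁^2 / (2·c₂·c₄)) · ε^2, where for j = t the inner sum is the empty sum, equal to 0. -/
theorem geom_aux (x T : ℝ) (m : ℕ) :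
    Real.exp (-((T - m) * x)) - Real.exp (-(T * x)) ≤
      x * ∑ j ∈ Finset.Icc 1 m, Real.exp (-((T - j) * x)) := by
  induction m with
  | zero => simp
  | succ m ih =>
    rw [Finset.sum_Icc_succ_top (by omega), mul_add]
    have h1 : Real.exp (-((T - m) * x))
        = Real.exp (-((T - (m + 1 : ℕ)) * x)) * Real.exp (-x) := by
      rw [← Real.exp_add]; congr 1; push_cast; ring
    have h2 := Real.add_one_le_exp (-x)
    have h3 := Real.exp_pos (-((T - (m + 1 : ℕ)) * x))
    rw [h1] at ih
    nlinarith

/-- Lower bound on the recursive error sum: if `c₁ε³ ≤ η_j ≤ c₂ε³` and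
`c₃ε ≤ τ_j ≤ c₄ε` for all `1 ≤ j ≤ t`, with `c₁ ≤ c₂`, `c₃ ≤ c₄`, and
`t ≥ ln 2/(c₂c₄ε⁴)`, then
`∑_{j=1}^t η_j²·exp(−∑_{k=j+1}^t η_kτ_k) ≥ (c₁²/(2c₂c₄))·ε²`. -/
theorem stmt_16 (ε : ℝ) (hε0 : 0 < ε) (hε1 : ε ≤ 1)
    (c₁ c₂ c₃ c₄ : ℝ) (hc₁ : 0 < c₁) (hc₂ : 0 < c₂) (hc₃ : 0 < c₃) (hc₄ : 0 < c₄)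
    (hc12 : c₁ ≤ c₂) (hc34 : c₃ ≤ c₄)
    (t : ℕ) (ht : 1 ≤ t) (htlarge : Real.log 2 / (c₂ * c₄ * ε ^ 4) ≤ (t : ℝ))
    (η τ : ℕ → ℝ)
    (hηl : ∀ j, 1 ≤ j → j ≤ t → c₁ * ε ^ 3 ≤ η j) (hηu : ∀ j, 1 ≤ j → j ≤ t → η j ≤ c₂ * ε ^ 3)
    (hτl : ∀ j, 1 ≤ j → j ≤ t → c₃ * ε ≤ τ j) (hτu : ∀ j, 1 ≤ j → j ≤ t → τ j ≤ c₄ * ε) :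
    (c₁ ^ 2 / (2 * c₂ * c₄)) * ε ^ 2 ≤
      ∑ j ∈ Finset.Icc 1 t, (η j) ^ 2 * Real.exp (-∑ k ∈ Finset.Icc (j + 1) t, η k * τ k) := by
  have hx : 0 < c₂ * c₄ * ε ^ 4 := by positivity
  set x := c₂ * c₄ * ε ^ 4 with hxdef
  have hg := geom_aux x t t
  have hlog : Real.log 2 ≤ t * x := by rwa [div_le_iff₀ hx] at htlarge
  have hhalf : Real.exp (-(t * x)) ≤ 1 / 2 := by
    calc Real.exp (-(t * x)) ≤ Real.exp (-Real.log 2) := Real.exp_le_exp.mpr (by linarith)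
      _ = 1 / 2 := by rw [Real.exp_neg, Real.exp_log (by norm_num)]; norm_num
  have hS : 1 / 2 ≤ x * ∑ j ∈ Finset.Icc 1 t, Real.exp (-(((t : ℝ) - j) * x)) := by
    simp only [sub_self, zero_mul, neg_zero, Real.exp_zero] at hg
    linarith
  have hterm : (c₁ * ε ^ 3) ^ 2 * ∑ j ∈ Finset.Icc 1 t, Real.exp (-(((t : ℝ) - j) * x)) ≤
      ∑ j ∈ Finset.Icc 1 t, (η j) ^ 2 * Real.exp (-∑ k ∈ Finset.Icc (j + 1) t, η k * τ k) := by
    rw [Finset.mul_sum]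
    refine Finset.sum_le_sum fun j hj => ?_
    obtain ⟨hj1, hj2⟩ := Finset.mem_Icc.mp hj
    have hin : ∑ k ∈ Finset.Icc (j + 1) t, η k * τ k ≤ ((t : ℝ) - j) * x := by
      have h := Finset.sum_le_card_nsmul (Finset.Icc (j + 1) t) (fun k => η k * τ k) x (by
        intro k hk
        obtain ⟨hk1, hk2⟩ := Finset.mem_Icc.mp hk
        have hk0 : 1 ≤ k := by omega
        have hτ0 : 0 ≤ τ k := le_trans (by positivity) (hτl k hk0 hk2)
        calc η k * τ k ≤ (c₂ * ε ^ 3) * (c₄ * ε) :=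
              mul_le_mul (hηu k hk0 hk2) (hτu k hk0 hk2) hτ0 (by positivity)
          _ = x := by rw [hxdef]; ring)
      rw [Nat.card_Icc, nsmul_eq_mul, Nat.add_sub_add_right, Nat.cast_sub hj2] at h
      exact h
    have hη := hηl j hj1 hj2
    have hexp := Real.exp_le_exp.mpr (neg_le_neg hin)
    gcongr
  refine le_trans ?_ hterm
  have e : (c₁ ^ 2 / (2 * c₂ * c₄)) * ε ^ 2 = (c₁ * ε ^ 3) ^ 2 * (1 / 2 / x) := by
    rw [hxdef]; field_simp
  rw [e]
  refine mul_le_mul_of_nonneg_left ?_ (by positivity)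
  rw [div_le_iff₀ hx, mul_comm]
  exact hS
end
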